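/- arXiv:math-ph/0308010 — 2 statements merged into one kernel-verified Lean document; each statement's English description precedes it below -/
import Mathlib

section
/- For a spherically symmetric satellite, A = B = C, the functions H₅(M,N,S) = ⟨M,N⟩ and H₆(M,N,S) = ⟨M,L⟩ are first integrals of the satellite system: both are constant along every differentiable solution t ↦ (M(t),N(t),S(t)). -/
noncomputable section

/-- Cross product on ℝ³. -/
def cross3 (a b : Fin 3 → ℝ) : Fin 3 → ℝ :=
  ![a 1 * b 2 - a 2 * b 1, a 2 * b 0 - a 0 * b 2, a 0 * b 1 - a 1 * b 0]

/-- Euclidean inner product on ℝ³. -/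
def dot3 (a b : Fin 3 → ℝ) : ℝ := a 0 * b 0 + a 1 * b 1 + a 2 * b 2

/-- `I v` where `I = diag(A,B,C)`. -/
def inertia (A B C : ℝ) (v : Fin 3 → ℝ) : Fin 3 → ℝ := ![A * v 0, B * v 1, C * v 2]

/-- `I⁻¹ v` where `I = diag(A,B,C)`. -/
def inertiaInv (A B C : ℝ) (v : Fin 3 → ℝ) : Fin 3 → ℝ := ![v 0 / A, v 1 / B, v 2 / C]

/-- Right-hand side for `M' = M×Ω + 3ω_K² S×(IS) + ξ⟨L,N⟩ L×N`, with `Ω = I⁻¹M`. -/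
def rhsM (A B C ωK ξ : ℝ) (L M N S : Fin 3 → ℝ) : Fin 3 → ℝ :=
  cross3 M (inertiaInv A B C M) + (3 * ωK ^ 2) • cross3 S (inertia A B C S)
    + (ξ * dot3 L N) • cross3 L N

/-- Right-hand side for `N' = N×Ω`. -/
def rhsN (A B C : ℝ) (M N : Fin 3 → ℝ) : Fin 3 → ℝ :=
  cross3 N (inertiaInv A B C M)

/-- Right-hand side for `S' = S×(Ω − ω_O N)`. -/
def rhsS (A B C ωO : ℝ) (M N S : Fin 3 → ℝ) : Fin 3 → ℝ :=
  cross3 S (inertiaInv A B C M - ωO • N)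

/-- `(M,N,S) : ℝ → ℝ³×ℝ³×ℝ³` is a (differentiable) solution of the satellite system. -/
def IsSatelliteSolution (A B C ωO ωK ξ : ℝ) (L : Fin 3 → ℝ)
    (M N S : ℝ → Fin 3 → ℝ) : Prop :=
  ∀ t : ℝ, ∀ i : Fin 3,
    HasDerivAt (fun s => M s i) (rhsM A B C ωK ξ L (M t) (N t) (S t) i) t ∧
    HasDerivAt (fun s => N s i) (rhsN A B C (M t) (N t) i) t ∧
    HasDerivAt (fun s => S s i) (rhsS A B C ωO (M t) (N t) (S t) i) t

/-!
When `A = B = C` the operators `I` and `I⁻¹` are scalar, so the torques `M × Ω` and `S × IS` vanish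
and the equations for `M` and `N` become `M' = g L × N` and `N' = h N × M` with scalar functions
`g = ξ⟨L, N⟩` and `h = A⁻¹`. Since a cross product is orthogonal to both of its factors, `M'` is
orthogonal to `L` and to `N`, and `N'` is orthogonal to `M`; hence `⟨M, L⟩' = 0` and
`⟨M, N⟩' = ⟨M', N⟩ + ⟨M, N'⟩ = 0`.
-/

open Matrix

theorem cross_dot_self_left {R : Type*} [CommRing R] (v w : Fin 3 → R) : v ⨯₃ w ⬝ᵥ v = 0 := by
  rw [dotProduct_comm, dot_self_cross]

theorem cross_dot_self_right {R : Type*} [CommRing R] (v w : Fin 3 → R) : v ⨯₃ w ⬝ᵥ w = 0 := by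
  rw [dotProduct_comm, dot_cross_self]

section Calculus

theorem hasDerivWithinAt_dotProduct {𝕜 ι : Type*} [NontriviallyNormedField 𝕜] [Fintype ι]
    {u v : 𝕜 → ι → 𝕜} {u' v' : ι → 𝕜} {s : Set 𝕜} {t : 𝕜}
    (hu : HasDerivWithinAt u u' s t) (hv : HasDerivWithinAt v v' s t) :
    HasDerivWithinAt (fun r => u r ⬝ᵥ v r) (u' ⬝ᵥ v t + u t ⬝ᵥ v') s t := by
  simp only [dotProduct, ← Finset.sum_add_distrib]
  exact .fun_sum fun i _ => (hasDerivWithinAt_pi.1 hu i).mul (hasDerivWithinAt_pi.1 hv i)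

variable {𝕜 : Type*} [RCLike 𝕜] {s : Set 𝕜} {t₁ t₂ : 𝕜}

theorem eq_of_hasDerivWithinAt_zero {E : Type*} [NormedAddCommGroup E] [NormedSpace 𝕜 E]
    {f : 𝕜 → E} (hs : Convex ℝ s) (hf : ∀ t ∈ s, HasDerivWithinAt f 0 s t)
    (h₁ : t₁ ∈ s) (h₂ : t₂ ∈ s) : f t₁ = f t₂ := by
  have hbound : ‖f t₁ - f t₂‖ ≤ 0 * ‖t₁ - t₂‖ :=
    Convex.norm_image_sub_le_of_norm_hasDerivWithin_le hf (fun _ _ => norm_zero.le) hs h₂ h₁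
  rwa [zero_mul, norm_le_zero_iff, sub_eq_zero] at hbound

theorem dotProduct_eq_of_hasDerivWithinAt {ι : Type*} [Fintype ι] {u v u' v' : 𝕜 → ι → 𝕜}
    (hs : Convex ℝ s) (hu : ∀ t ∈ s, HasDerivWithinAt u (u' t) s t)
    (hv : ∀ t ∈ s, HasDerivWithinAt v (v' t) s t)
    (huv : ∀ t ∈ s, u' t ⬝ᵥ v t + u t ⬝ᵥ v' t = 0) (h₁ : t₁ ∈ s) (h₂ : t₂ ∈ s) :
    u t₁ ⬝ᵥ v t₁ = u t₂ ⬝ᵥ v t₂ :=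
  eq_of_hasDerivWithinAt_zero (f := fun t => u t ⬝ᵥ v t) hs
    (fun t ht => huv t ht ▸ hasDerivWithinAt_dotProduct (hu t ht) (hv t ht)) h₁ h₂

end Calculus

theorem cross3_eq_crossProduct (a b : Fin 3 → ℝ) : cross3 a b = a ⨯₃ b :=
  (cross_apply a b).symm

theorem dot3_eq_dotProduct (a b : Fin 3 → ℝ) : dot3 a b = a ⬝ᵥ b :=
  (vec3_dotProduct a b).symm

theorem inertia_self (A : ℝ) (v : Fin 3 → ℝ) : inertia A A A v = A • v := by
  ext i
  fin_cases i <;> rfl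

theorem inertiaInv_self (A : ℝ) (v : Fin 3 → ℝ) : inertiaInv A A A v = A⁻¹ • v := by
  ext i
  fin_cases i <;> exact div_eq_inv_mul _ _

theorem rhsM_self (A ωK ξ : ℝ) (L M N S : Fin 3 → ℝ) :
    rhsM A A A ωK ξ L M N S = (ξ * dot3 L N) • L ⨯₃ N := by
  simp only [rhsM, cross3_eq_crossProduct, inertia_self, inertiaInv_self, map_smul, cross_self,
    smul_zero, zero_add]

theorem rhsN_self (A : ℝ) (M N : Fin 3 → ℝ) : rhsN A A A M N = A⁻¹ • N ⨯₃ M := by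
  rw [rhsN, cross3_eq_crossProduct, inertiaInv_self, map_smul]

namespace IsSatelliteSolution

variable {A B C ωO ωK ξ : ℝ} {L : Fin 3 → ℝ} {M N S : ℝ → Fin 3 → ℝ}

theorem hasDerivAt_M (hsol : IsSatelliteSolution A B C ωO ωK ξ L M N S) (t : ℝ) :
    HasDerivAt M (rhsM A B C ωK ξ L (M t) (N t) (S t)) t :=
  hasDerivAt_pi.2 fun i => (hsol t i).1

theorem hasDerivAt_N (hsol : IsSatelliteSolution A B C ωO ωK ξ L M N S) (t : ℝ) :
    HasDerivAt N (rhsN A B C (M t) (N t)) t :=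
  hasDerivAt_pi.2 fun i => (hsol t i).2.1

theorem hasDerivAt_M_of_spherical (hsol : IsSatelliteSolution A A A ωO ωK ξ L M N S) (t : ℝ) :
    HasDerivAt M ((ξ * dot3 L (N t)) • L ⨯₃ N t) t :=
  rhsM_self A ωK ξ L (M t) (N t) (S t) ▸ hsol.hasDerivAt_M t

theorem hasDerivAt_N_of_spherical (hsol : IsSatelliteSolution A A A ωO ωK ξ L M N S) (t : ℝ) :
    HasDerivAt N (A⁻¹ • N t ⨯₃ M t) t :=
  rhsN_self A (M t) (N t) ▸ hsol.hasDerivAt_N t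

end IsSatelliteSolution

theorem spherical_first_integrals_general {s : Set ℝ} (hs : Convex ℝ s) {g h : ℝ → ℝ}
    {L : Fin 3 → ℝ} {M N : ℝ → Fin 3 → ℝ}
    (hM : ∀ t ∈ s, HasDerivWithinAt M (g t • L ⨯₃ N t) s t)
    (hN : ∀ t ∈ s, HasDerivWithinAt N (h t • N t ⨯₃ M t) s t)
    {t₁ t₂ : ℝ} (h₁ : t₁ ∈ s) (h₂ : t₂ ∈ s) :
    M t₁ ⬝ᵥ N t₁ = M t₂ ⬝ᵥ N t₂ ∧ M t₁ ⬝ᵥ L = M t₂ ⬝ᵥ L := by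
  constructor
  · refine dotProduct_eq_of_hasDerivWithinAt hs hM hN (fun t _ => ?_) h₁ h₂
    rw [smul_dotProduct, cross_dot_self_right, dotProduct_smul, dot_cross_self, smul_zero,
      smul_zero, add_zero]
  · refine dotProduct_eq_of_hasDerivWithinAt hs hM (fun t _ => hasDerivWithinAt_const t s L)
      (fun t _ => ?_) h₁ h₂
    rw [smul_dotProduct, cross_dot_self_left, smul_zero, dotProduct_zero, add_zero]

/-- for a spherically symmetric satellite (`A = B = C`),
`H₅ = ⟨M,N⟩` and `H₆ = ⟨M,L⟩` are first integrals of the satellite system. -/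
theorem spherical_first_integrals (A B C ωO ωK ξ : ℝ)
    (hA : 0 < A) (hB : 0 < B) (hC : 0 < C) (hAB : A = B) (hBC : B = C)
    (L : Fin 3 → ℝ) (M N S : ℝ → Fin 3 → ℝ)
    (hsol : IsSatelliteSolution A B C ωO ωK ξ L M N S) :
    ∀ t₁ t₂ : ℝ,
      dot3 (M t₁) (N t₁) = dot3 (M t₂) (N t₂) ∧
      dot3 (M t₁) L = dot3 (M t₂) L := by
  subst hAB hBC
  simp only [dot3_eq_dotProduct]
  exact fun t₁ t₂ => spherical_first_integrals_general convex_univ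
    (fun t _ => (hsol.hasDerivAt_M_of_spherical t).hasDerivWithinAt)
    (fun t _ => (hsol.hasDerivAt_N_of_spherical t).hasDerivWithinAt)
    (Set.mem_univ t₁) (Set.mem_univ t₂)
end
end

section
/- Let r be the case C < 1 normal-form coefficient with poles z₁ = k, z₂ = −k, z₃ = ik', z₄ = −ik'. There exist e_∞ ∈ {−1, 2}, e₁, e₂, e₃, e₄ ∈ {1/4, 3/4} with d := 1 − (e_∞ + e₁ + e₂ + e₃ + e₄) a non-negative integer, and a monic polynomial P ∈ ℂ[z] of degree d satisfying P'' + 2wP' + (w' + w² − r)P = 0 on ℂ ∖ {z₁,z₂,z₃,z₄}, where w(z) = Σᵢ₌₁⁴ eᵢ/(z−zᵢ), if and only if 2k² − 1 > 0, ξ = 1/(2k²−1) and ω² = 2/(2k²−1); in that case the parameters are e_∞ = −1, e₁ = e₂ = e₃ = e₄ = 1/4 and P(z) = z − 1/ω. -/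
noncomputable section

open Complex

/-- The complementary modulus `k' = √(1−k²)`. -/
def kp (k : ℝ) : ℝ := Real.sqrt (1 - k ^ 2)

/-- The coefficient `p(z) = z(−1 + 2(k²−z²)) / ((k²−z²)(z²+k'²))`. -/
def pcoef (k : ℝ) (z : ℂ) : ℂ :=
  z * (-1 + 2 * ((k : ℂ) ^ 2 - z ^ 2)) /
    (((k : ℂ) ^ 2 - z ^ 2) * (z ^ 2 + (kp k : ℂ) ^ 2))

/-- The coefficient `q(z)` in the case `C < 1`. -/
def qLt (k ω ξ : ℝ) (z : ℂ) : ℂ :=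
  (-(ξ : ℂ) + (1 + (ω : ℂ) * z) ^ 2 + (ω : ℂ) ^ 2 * (z ^ 2 + (kp k : ℂ) ^ 2)) /
    ((ω : ℂ) ^ 2 * ((k : ℂ) ^ 2 - z ^ 2) * (z ^ 2 + (kp k : ℂ) ^ 2))

/-- The normal-form coefficient `r = −q + p'/2 + p²/4` in the case `C < 1`. -/
def rLt (k ω ξ : ℝ) (z : ℂ) : ℂ :=
  -qLt k ω ξ z + deriv (pcoef k) z / 2 + pcoef k z ^ 2 / 4

/-- The poles `z₁ = k`, `z₂ = −k`, `z₃ = ik'`, `z₄ = −ik'`. -/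
def poles (k : ℝ) : Fin 4 → ℂ :=
  ![(k : ℂ), -(k : ℂ), I * (kp k : ℂ), -(I * (kp k : ℂ))]

/-!
Write the equation in the gauge `w = p / 2 + v`. Since `r` is the normal-form coefficient of
`y'' + p y' + q y = 0`, the condition on `(P, w)` becomes
`P'' + (p + 2v) P' + (v' + v² + p v + q) P = 0`. Here `p = ∑ (1/2) / (z - zᵢ)`, so `v` only sees
the poles with exponent `3/4`. The degree condition leaves two cases: `d = 1` with no such pole, or
`d = 0` with exactly two. After clearing denominators each case is a quadratic polynomial identity.
In the first, comparing coefficients gives `P = z - 1/ω` and the conditions on the parameters. In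
the second, the linear coefficient says that the two poles add up to `2/ω`, whereas a real sum of
two distinct poles is `0`.
-/

theorem quadratic_coeffs_eq_zero_of_forall_notMem {R : Type*} [CommRing R] [IsDomain R]
    [Infinite R] {S : Set R} (hS : S.Finite) {a b c : R}
    (h : ∀ z ∉ S, a * z ^ 2 + b * z + c = 0) : a = 0 ∧ b = 0 ∧ c = 0 := by
  have hzero : (Cubic.mk 0 a b c).toPoly = 0 :=
    Polynomial.eq_zero_of_infinite_isRoot _ <| hS.infinite_compl.mono fun z hz => by
      simpa [Cubic.toPoly] using h z hz
  exact (Cubic.ext_iff.1 ((Cubic.toPoly_eq_zero_iff _).1 hzero)).2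

section PoleSum

variable {𝕜 ι : Type*} [NontriviallyNormedField 𝕜] [Fintype ι]

/-- The rational function `∑ eᵢ / (z - aᵢ)` with at most simple poles `aᵢ` and residues `eᵢ`, the
shape of `w` in the Kovacic algorithm. -/
def poleSum (e a : ι → 𝕜) (z : 𝕜) : 𝕜 := ∑ i, e i / (z - a i)

theorem poleSum_add (e f a : ι → 𝕜) (z : 𝕜) :
    poleSum (e + f) a z = poleSum e a z + poleSum f a z := by
  simp only [poleSum, Pi.add_apply, add_div, Finset.sum_add_distrib]

theorem poleSum_single [DecidableEq ι] (i : ι) (c : 𝕜) (a : ι → 𝕜) (z : 𝕜) :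
    poleSum (Pi.single i c) a z = c / (z - a i) := by
  rw [poleSum, Finset.sum_eq_single_of_mem i (Finset.mem_univ i) fun j _ hj => by simp [hj],
    Pi.single_eq_same]

theorem hasDerivAt_poleSum (e : ι → 𝕜) {a : ι → 𝕜} {z : 𝕜} (hz : ∀ i, z ≠ a i) :
    HasDerivAt (poleSum e a) (-∑ i, e i / (z - a i) ^ 2) z := by
  rw [← Finset.sum_neg_distrib]
  refine HasDerivAt.fun_sum fun i _ => ?_
  have hsub : HasDerivAt (fun y => y - a i) 1 z := (hasDerivAt_id z).sub_const (a i)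
  simpa [div_eq_mul_inv] using (hsub.inv (sub_ne_zero.2 (hz i))).const_mul (e i)

end PoleSum

section NormalForm

variable {𝕜 : Type*} [NontriviallyNormedField 𝕜]

/-- The coefficient `r` of the equation `W'' = r W` obtained from `y'' + p y' + q y = 0` by
substituting `W = exp (∫ p / 2) y`. -/
def normalForm (p q : 𝕜 → 𝕜) (z : 𝕜) : 𝕜 := -q z + deriv p z / 2 + p z ^ 2 / 4

/-- The left-hand side of the Kovacic condition `P'' + 2wP' + (w' + w² - r)P = 0`, which says that
`W = P exp (∫ w)` solves `W'' = r W`. -/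
def kovacicExpr (w r : 𝕜 → 𝕜) (P : Polynomial 𝕜) (z : 𝕜) : 𝕜 :=
  P.derivative.derivative.eval z + 2 * w z * P.derivative.eval z +
    (deriv w z + w z ^ 2 - r z) * P.eval z

theorem kovacicExpr_X_sub_C (w r : 𝕜 → 𝕜) (c z : 𝕜) :
    kovacicExpr w r (Polynomial.X - Polynomial.C c) z =
      deriv (deriv fun y => y - c) z + 2 * w z * deriv (fun y => y - c) z +
        (deriv w z + w z ^ 2 - r z) * (z - c) := by
  simp [kovacicExpr]

theorem kovacicExpr_half_add_normalForm [NeZero (2 : 𝕜)] {p v : 𝕜 → 𝕜} {z : 𝕜}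
    (hp : DifferentiableAt 𝕜 p z) (hv : DifferentiableAt 𝕜 v z) (q : 𝕜 → 𝕜)
    (P : Polynomial 𝕜) :
    kovacicExpr (fun y => p y / 2 + v y) (normalForm p q) P z =
      P.derivative.derivative.eval z + (p z + 2 * v z) * P.derivative.eval z +
        (deriv v z + v z ^ 2 + p z * v z + q z) * P.eval z := by
  have htwo : (2 : 𝕜) ≠ 0 := two_ne_zero
  have hfour : (4 : 𝕜) = 2 * 2 := by norm_num
  rw [kovacicExpr, normalForm, deriv_fun_add (hp.div_const 2) hv, deriv_div_const, hfour]
  field_simp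
  ring

variable [CharZero 𝕜] {ι : Type*} [Fintype ι]

theorem kovacicExpr_quarter_add_normalForm {a : ι → 𝕜} {z : 𝕜} (hz : ∀ i, z ≠ a i)
    (f : ι → 𝕜) (q : 𝕜 → 𝕜) (P : Polynomial 𝕜) :
    kovacicExpr (poleSum ((fun _ => 1 / 4) + f) a) (normalForm (poleSum (fun _ => 1 / 2) a) q) P z =
      P.derivative.derivative.eval z +
        (poleSum (fun _ => 1 / 2) a z + 2 * poleSum f a z) * P.derivative.eval z +
        (deriv (poleSum f a) z + poleSum f a z ^ 2 + poleSum (fun _ => 1 / 2) a z * poleSum f a z +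
          q z) * P.eval z := by
  have hw : poleSum ((fun _ => 1 / 4) + f) a =
      fun y => poleSum (fun _ => 1 / 2) a y / 2 + poleSum f a y := by
    ext y
    rw [poleSum_add, add_left_inj, poleSum, poleSum, Finset.sum_div]
    exact Finset.sum_congr rfl fun i _ => by ring
  rw [hw, kovacicExpr_half_add_normalForm (hasDerivAt_poleSum _ hz).differentiableAt
    (hasDerivAt_poleSum _ hz).differentiableAt]

-- The double poles cancel, because `v' + v² = 1 / ((z - aᵢ) (z - aⱼ)) - v²` and `p v - v²` is
-- `v (p - v)`, in which `p - v` is regular at `aᵢ` and `aⱼ`.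
theorem riccati_single_add_single [DecidableEq ι] {a : ι → 𝕜} {z : 𝕜} (hz : ∀ i, z ≠ a i)
    {i j : ι} (hij : i ≠ j) :
    let v := poleSum (Pi.single i (1 / 2) + Pi.single j (1 / 2)) a
    deriv v z + v z ^ 2 + poleSum (fun _ => 1 / 2) a z * v z =
      1 / ((z - a i) * (z - a j)) +
        1 / 4 * (1 / (z - a i) + 1 / (z - a j)) * ∑ l ∈ {i, j}ᶜ, 1 / (z - a l) := by
  intro v
  have hv (y : 𝕜) : v y = 1 / 2 / (y - a i) + 1 / 2 / (y - a j) := by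
    simp only [v, poleSum_add, poleSum_single]
  have hv' : deriv v z = -(1 / 2 / (z - a i) ^ 2 + 1 / 2 / (z - a j) ^ 2) := by
    rw [(hasDerivAt_poleSum _ hz).deriv]
    simp [Pi.single_apply, add_div, ite_div, Finset.sum_add_distrib]
  have hp : poleSum (fun _ => 1 / 2) a z =
      v z + 1 / 2 * ∑ l ∈ {i, j}ᶜ, 1 / (z - a l) := by
    rw [poleSum, ← Finset.sum_add_sum_compl {i, j}, Finset.sum_pair hij, hv, Finset.mul_sum]
    congr! 2 with l
    ring
  have hi := sub_ne_zero.2 (hz i)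
  have hj := sub_ne_zero.2 (hz j)
  rw [hp, hv', hv]
  field_simp
  ring

end NormalForm

section Poles

variable {k : ℝ}

theorem kp_pos (hk : k ^ 2 < 1) : 0 < kp k :=
  Real.sqrt_pos.2 (sub_pos.2 hk)

theorem ofReal_kp_sq (hk : k ^ 2 ≤ 1) : (kp k : ℂ) ^ 2 = 1 - (k : ℂ) ^ 2 := by
  exact_mod_cast Real.sq_sqrt (sub_nonneg.2 hk)

theorem sum_poles (k : ℝ) : ∑ i, poles k i = 0 := by
  simp [Fin.sum_univ_four, poles]

theorem prod_sub_poles (k : ℝ) (z : ℂ) :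
    ∏ i, (z - poles k i) = (z ^ 2 - (k : ℂ) ^ 2) * (z ^ 2 + (kp k : ℂ) ^ 2) := by
  simp only [Fin.prod_univ_four, poles, Matrix.cons_val]
  linear_combination (-(z ^ 2 - (k : ℂ) ^ 2) * (kp k : ℂ) ^ 2) * I_sq

theorem poles_add_poles_ne_ofReal (hk : k ^ 2 < 1) {i j : Fin 4} (hij : i ≠ j) {x : ℝ}
    (hx : x ≠ 0) : poles k i + poles k j ≠ x := by
  have hkp := (kp_pos hk).ne'
  rw [Ne, Complex.ext_iff]
  fin_cases i <;> fin_cases j <;> simp_all [poles, eq_comm]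

theorem pcoef_eq_div (k : ℝ) (z : ℂ) :
    pcoef k z = z * (2 * z ^ 2 + 1 - 2 * (k : ℂ) ^ 2) / ∏ i, (z - poles k i) := by
  rw [pcoef, prod_sub_poles, ← neg_div_neg_eq]
  congr 1 <;> ring

theorem pcoef_eq_poleSum (hk : k ^ 2 ≤ 1) {z : ℂ} (hz : ∀ i, z ≠ poles k i) :
    pcoef k z = poleSum (fun _ => 1 / 2) (poles k) z := by
  have hne (i : Fin 4) : z - poles k i ≠ 0 := sub_ne_zero.2 (hz i)
  rw [pcoef_eq_div, div_eq_iff (Finset.prod_ne_zero_iff.2 fun i _ => hne i), poleSum,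
    Fin.sum_univ_four, Fin.prod_univ_four]
  have h0 := hne 0
  have h1 := hne 1
  have h2 := hne 2
  have h3 := hne 3
  field_simp
  simp only [poles, Matrix.cons_val]
  linear_combination (2 * z) * (kp k : ℂ) ^ 2 * I_sq - 2 * z * ofReal_kp_sq hk

/-- The constant coefficient `m` of the quadratic `2z² + 2z/ω + m` which is, up to sign, the
numerator of `q` over the denominator `∏ (z - zᵢ)`. -/
def qConst (k ω ξ : ℝ) : ℝ := (1 - ξ) / ω ^ 2 + 1 - k ^ 2

theorem qLt_eq_neg_div {ω : ℝ} (hk : k ^ 2 ≤ 1) (hω : ω ≠ 0) (ξ : ℝ) (z : ℂ) :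
    qLt k ω ξ z =
      -((2 * z ^ 2 + 2 / (ω : ℂ) * z + (qConst k ω ξ : ℂ)) / ∏ i, (z - poles k i)) := by
  have hω' : (ω : ℂ) ≠ 0 := ofReal_ne_zero.2 hω
  have hnum : -(ξ : ℂ) + (1 + ω * z) ^ 2 + (ω : ℂ) ^ 2 * (z ^ 2 + (kp k : ℂ) ^ 2) =
      (ω : ℂ) ^ 2 * (2 * z ^ 2 + 2 / (ω : ℂ) * z + (qConst k ω ξ : ℂ)) := by
    rw [ofReal_kp_sq hk, qConst]
    push_cast
    field_simp
    ring
  have hden : (ω : ℂ) ^ 2 * ((k : ℂ) ^ 2 - z ^ 2) * (z ^ 2 + (kp k : ℂ) ^ 2) =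
      (ω : ℂ) ^ 2 * -∏ i, (z - poles k i) := by
    rw [prod_sub_poles]
    ring
  rw [qLt, hnum, hden, mul_div_mul_left _ _ (pow_ne_zero 2 hω'), div_neg]

theorem rLt_eq_normalForm (hk : k ^ 2 ≤ 1) (ω ξ : ℝ) {z : ℂ} (hz : ∀ i, z ≠ poles k i) :
    rLt k ω ξ z = normalForm (poleSum (fun _ => 1 / 2) (poles k)) (qLt k ω ξ) z := by
  have hev : pcoef k =ᶠ[nhds z] poleSum (fun _ => 1 / 2) (poles k) := by
    filter_upwards [Filter.eventually_all.2 fun i => isOpen_ne.mem_nhds (hz i)] with y hy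
      using pcoef_eq_poleSum hk hy
  rw [rLt, normalForm, hev.deriv_eq, hev.self_of_nhds]

theorem kovacic_parameters_iff {ω : ℝ} (hω : ω ≠ 0) (k ξ : ℝ) :
    (0 < 2 * k ^ 2 - 1 ∧ ξ = 1 / (2 * k ^ 2 - 1) ∧ ω ^ 2 = 2 / (2 * k ^ 2 - 1)) ↔
      qConst k ω ξ = 0 ∧ 2 * k ^ 2 - 1 = 2 / ω ^ 2 := by
  unfold qConst
  constructor
  · rintro ⟨hpos, rfl, hsq⟩
    rw [hsq]
    constructor <;> field_simp
    ring
  · rintro ⟨hconst, hk⟩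
    have hk' : k ^ 2 = (2 / ω ^ 2 + 1) / 2 := by linarith
    rw [hk'] at hconst
    rw [hk]
    refine ⟨by positivity, ?_, by field_simp⟩
    field_simp at hconst ⊢
    linarith

end Poles

section Degree

theorem exists_compl_pair_eq {i j : Fin 4} (hij : i ≠ j) :
    ∃ l m : Fin 4, l ≠ m ∧ ({i, j} : Finset (Fin 4))ᶜ = {l, m} :=
  Finset.card_eq_two.1 (by rw [Finset.card_compl, Finset.card_pair hij, Fintype.card_fin])

theorem kovacic_exponents_cases {einf : ℂ} {e : Fin 4 → ℂ} {d : ℕ} (hinf : einf = -1 ∨ einf = 2)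
    (he : ∀ i, e i = 1 / 4 ∨ e i = 3 / 4) (hd : (d : ℂ) = 1 - (einf + ∑ i, e i)) :
    (d = 1 ∧ einf = -1 ∧ e = fun _ => 1 / 4) ∨
      (d = 0 ∧ ∃ i j, i ≠ j ∧
        e = (fun _ => 1 / 4) + (Pi.single i (1 / 2) + Pi.single j (1 / 2))) := by
  obtain ⟨S, hS⟩ : ∃ S : Finset (Fin 4), ∀ i, e i = 1 / 4 + if i ∈ S then 1 / 2 else 0 :=
    ⟨Finset.univ.filter fun i => e i = 3 / 4, fun i => by rcases he i with h | h <;> norm_num [h]⟩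
  have hsum : ∑ i, e i = 1 + (S.card : ℂ) / 2 := by
    simp [hS, Finset.sum_add_distrib, div_eq_mul_inv]
  rcases hinf with rfl | rfl
  · have hcard : 2 * d + S.card = 2 := by
      rw [hsum] at hd
      exact_mod_cast (by linear_combination 2 * hd : (2 * d + S.card : ℂ) = 2)
    obtain ⟨rfl, hS0⟩ | ⟨rfl, hS2⟩ : (d = 1 ∧ S.card = 0) ∨ (d = 0 ∧ S.card = 2) := by lia
    · refine Or.inl ⟨rfl, rfl, funext fun i => ?_⟩
      simp [hS, Finset.card_eq_zero.1 hS0]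
    · obtain ⟨i, j, hij, rfl⟩ := Finset.card_eq_two.1 hS2
      refine Or.inr ⟨rfl, i, j, hij, funext fun l => ?_⟩
      rw [hS]
      rcases eq_or_ne l i with rfl | hi
      · simp [hij]
      · rcases eq_or_ne l j with rfl | hj
        · simp [hi]
        · simp [hi, hj]
  · have hneg : 2 * d + S.card + 4 = 0 := by
      rw [hsum] at hd
      exact_mod_cast (by linear_combination 2 * hd : (2 * d + S.card + 4 : ℂ) = 0)
    lia

end Degree

section Kovacic

variable {k ω : ℝ}

/-- The data `(e_∞, e, d, P)` make the first case of the Kovacic algorithm succeed for `W'' = r W`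
with the four poles `a`. -/
def IsKovacicData (a : Fin 4 → ℂ) (r : ℂ → ℂ) (einf : ℂ) (e : Fin 4 → ℂ) (d : ℕ)
    (P : Polynomial ℂ) : Prop :=
  (einf = -1 ∨ einf = 2) ∧ (∀ i, e i = 1 / 4 ∨ e i = 3 / 4) ∧
    (d : ℂ) = 1 - (einf + ∑ i, e i) ∧ P.Monic ∧ P.natDegree = d ∧
    ∀ z, (∀ i, z ≠ a i) → kovacicExpr (poleSum e a) r P z = 0

theorem kovacicExpr_X_add_C (hk : k ^ 2 ≤ 1) (hω : ω ≠ 0) (ξ : ℝ) (c : ℂ) {z : ℂ}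
    (hz : ∀ i, z ≠ poles k i) :
    kovacicExpr (poleSum (fun _ => 1 / 4) (poles k)) (rLt k ω ξ)
        (Polynomial.X + Polynomial.C c) z =
      -((2 * (c + 1 / ω) * z ^ 2 + (qConst k ω ξ + 2 / ω * c + (2 * k ^ 2 - 1)) * z +
        qConst k ω ξ * c) / ∏ i, (z - poles k i)) := by
  have hgauge := kovacicExpr_quarter_add_normalForm hz 0 (qLt k ω ξ)
    (Polynomial.X + Polynomial.C c)
  have hzero : poleSum (0 : Fin 4 → ℂ) (poles k) = fun _ => 0 := by ext; simp [poleSum]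
  rw [add_zero, hzero, ← pcoef_eq_poleSum hk hz, pcoef_eq_div, qLt_eq_neg_div hk hω] at hgauge
  rw [kovacicExpr, rLt_eq_normalForm hk ω ξ hz, ← kovacicExpr, hgauge]
  simp only [Polynomial.derivative_add, Polynomial.derivative_X, Polynomial.derivative_C,
    Polynomial.derivative_one, Polynomial.eval_add, Polynomial.eval_X, Polynomial.eval_C,
    Polynomial.eval_one, Polynomial.eval_zero, deriv_const, add_zero]
  ring

theorem forall_kovacicExpr_X_add_C_eq_zero_iff (hk : k ^ 2 ≤ 1) (hω : ω ≠ 0) (ξ : ℝ) (c : ℂ) :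
    (∀ z, (∀ i, z ≠ poles k i) → kovacicExpr (poleSum (fun _ => 1 / 4) (poles k)) (rLt k ω ξ)
        (Polynomial.X + Polynomial.C c) z = 0) ↔
      c = -(1 / ω) ∧ qConst k ω ξ = 0 ∧ 2 * k ^ 2 - 1 = 2 / ω ^ 2 := by
  constructor
  · intro h
    obtain ⟨hquad, hlin, hconst⟩ : 2 * (c + 1 / ω) = 0 ∧
        qConst k ω ξ + 2 / ω * c + (2 * k ^ 2 - 1) = 0 ∧ qConst k ω ξ * c = 0 := by
      refine quadratic_coeffs_eq_zero_of_forall_notMem (Set.finite_range (poles k)) fun z hz => ?_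
      have hz' : ∀ i, z ≠ poles k i := fun i hi => hz ⟨i, hi.symm⟩
      have hQ : ∏ i, (z - poles k i) ≠ 0 :=
        Finset.prod_ne_zero_iff.2 fun i _ => sub_ne_zero.2 (hz' i)
      have hexpr := h z hz'
      rw [kovacicExpr_X_add_C hk hω ξ c hz', neg_eq_zero, div_eq_zero_iff] at hexpr
      exact hexpr.resolve_right hQ
    have hc : c = -(1 / ω) := by linear_combination hquad / 2
    have hc0 : c ≠ 0 := by simpa [hc] using hω
    have hm : (qConst k ω ξ : ℂ) = 0 := (mul_eq_zero.1 hconst).resolve_right hc0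
    have hk' : 2 * (k : ℂ) ^ 2 - 1 = 2 / (ω : ℂ) ^ 2 := by
      linear_combination hlin - hm - 2 / (ω : ℂ) * hc
    exact ⟨hc, by exact_mod_cast hm, by exact_mod_cast hk'⟩
  · rintro ⟨rfl, hm, hk'⟩ z hz
    have hkC : 2 * (k : ℂ) ^ 2 - 1 = 2 / (ω : ℂ) ^ 2 := by exact_mod_cast hk'
    rw [kovacicExpr_X_add_C hk hω ξ _ hz, hm, hkC]
    push_cast
    ring

theorem kovacicExpr_one (hk : k ^ 2 ≤ 1) (hω : ω ≠ 0) (ξ : ℝ) {i j l m : Fin 4} (hij : i ≠ j)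
    (hlm : l ≠ m) (hcompl : ({i, j} : Finset (Fin 4))ᶜ = {l, m}) {z : ℂ}
    (hz : ∀ i, z ≠ poles k i) :
    kovacicExpr (poleSum ((fun _ => 1 / 4) + (Pi.single i (1 / 2) + Pi.single j (1 / 2))) (poles k))
        (rLt k ω ξ) 1 z =
      ((poles k i + poles k j - 2 / ω) * z + (poles k l * poles k m -
        (poles k i + poles k j) ^ 2 / 4 - qConst k ω ξ)) / ∏ i, (z - poles k i) := by
  have hsum : poles k i + poles k j + (poles k l + poles k m) = 0 := by
    rw [← sum_poles k, ← Finset.sum_add_sum_compl {i, j}, hcompl, Finset.sum_pair hij,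
      Finset.sum_pair hlm]
  have hprod : ∏ i, (z - poles k i) =
      (z - poles k i) * (z - poles k j) * ((z - poles k l) * (z - poles k m)) := by
    rw [← Finset.prod_mul_prod_compl {i, j}, hcompl, Finset.prod_pair hij, Finset.prod_pair hlm]
  rw [kovacicExpr, rLt_eq_normalForm hk ω ξ hz, ← kovacicExpr,
    kovacicExpr_quarter_add_normalForm hz, riccati_single_add_single hz hij,
    qLt_eq_neg_div hk hω, hcompl, Finset.sum_pair hlm, hprod]
  simp only [Polynomial.derivative_one, Polynomial.derivative_zero, Polynomial.eval_zero,
    Polynomial.eval_one, mul_zero, mul_one, zero_add]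
  have hi := sub_ne_zero.2 (hz i)
  have hj := sub_ne_zero.2 (hz j)
  have hl := sub_ne_zero.2 (hz l)
  have hm := sub_ne_zero.2 (hz m)
  have hnum : (z - poles k l) * (z - poles k m) + 1 / 4 * ((z - poles k i) + (z - poles k j)) *
      ((z - poles k l) + (z - poles k m)) - (2 * z ^ 2 + 2 / ω * z + qConst k ω ξ) =
      (poles k i + poles k j - 2 / ω) * z + (poles k l * poles k m -
        (poles k i + poles k j) ^ 2 / 4 - qConst k ω ξ) := by
    linear_combination (-z - (2 * z - poles k i - poles k j) / 4) * hsum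
  rw [← hnum]
  field_simp
  ring

theorem not_forall_kovacicExpr_one_eq_zero (hk : k ^ 2 < 1) (hω : ω ≠ 0) (ξ : ℝ) {i j : Fin 4}
    (hij : i ≠ j) :
    ¬ ∀ z, (∀ i, z ≠ poles k i) → kovacicExpr
      (poleSum ((fun _ => 1 / 4) + (Pi.single i (1 / 2) + Pi.single j (1 / 2))) (poles k))
      (rLt k ω ξ) 1 z = 0 := by
  intro h
  obtain ⟨l, m, hlm, hcompl⟩ := exists_compl_pair_eq hij
  obtain ⟨-, hlin, -⟩ : (0 : ℂ) = 0 ∧ poles k i + poles k j - 2 / ω = 0 ∧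
      poles k l * poles k m - (poles k i + poles k j) ^ 2 / 4 - qConst k ω ξ = 0 := by
    refine quadratic_coeffs_eq_zero_of_forall_notMem (Set.finite_range (poles k)) fun z hz => ?_
    have hz' : ∀ i, z ≠ poles k i := fun i hi => hz ⟨i, hi.symm⟩
    have hQ : ∏ i, (z - poles k i) ≠ 0 :=
      Finset.prod_ne_zero_iff.2 fun i _ => sub_ne_zero.2 (hz' i)
    have hexpr := h z hz'
    rw [kovacicExpr_one hk.le hω ξ hij hlm hcompl hz', div_eq_zero_iff] at hexpr
    rw [zero_mul, zero_add]
    exact hexpr.resolve_right hQ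
  refine poles_add_poles_ne_ofReal hk hij (div_ne_zero two_ne_zero hω) ?_
  push_cast
  exact sub_eq_zero.1 hlin

theorem isKovacicData_iff (hk : k ^ 2 < 1) (hω : ω ≠ 0) (ξ : ℝ) (einf : ℂ) (e : Fin 4 → ℂ)
    (d : ℕ) (P : Polynomial ℂ) :
    IsKovacicData (poles k) (rLt k ω ξ) einf e d P ↔
      (einf = -1 ∧ e = (fun _ => 1 / 4) ∧ d = 1 ∧
        P = Polynomial.X - Polynomial.C (1 / (ω : ℂ))) ∧
      0 < 2 * k ^ 2 - 1 ∧ ξ = 1 / (2 * k ^ 2 - 1) ∧ ω ^ 2 = 2 / (2 * k ^ 2 - 1) := by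
  rw [kovacic_parameters_iff hω]
  constructor
  · rintro ⟨hinf, he, hd, hP, hPd, h⟩
    rcases kovacic_exponents_cases hinf he hd with ⟨rfl, rfl, rfl⟩ | ⟨rfl, i, j, hij, rfl⟩
    · rw [hP.eq_X_add_C hPd] at h ⊢
      obtain ⟨hc, hparam⟩ := (forall_kovacicExpr_X_add_C_eq_zero_iff hk.le hω ξ _).1 h
      refine ⟨⟨rfl, rfl, rfl, ?_⟩, hparam⟩
      rw [hc, Polynomial.C_neg, sub_eq_add_neg]
    · rw [hP.natDegree_eq_zero.1 hPd] at h
      exact absurd h (not_forall_kovacicExpr_one_eq_zero hk hω ξ hij)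
  · rintro ⟨⟨rfl, rfl, rfl, rfl⟩, hparam⟩
    refine ⟨Or.inl rfl, fun _ => Or.inl rfl, by norm_num, Polynomial.monic_X_sub_C _,
      Polynomial.natDegree_X_sub_C _, ?_⟩
    rw [sub_eq_add_neg, ← Polynomial.C_neg]
    exact (forall_kovacicExpr_X_add_C_eq_zero_iff hk.le hω ξ _).2 ⟨rfl, hparam⟩

end Kovacic

/-- case `C < 1`: the first case of the Kovacic algorithm succeeds
(there are exponents `e_∞ ∈ {−1,2}`, `eᵢ ∈ {1/4,3/4}` with
`d = 1 − (e_∞ + Σeᵢ) ∈ ℕ₀` and a monic polynomial `P` of degree `d` with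
`P'' + 2wP' + (w' + w² − r)P = 0`, `w = Σ eᵢ/(z−zᵢ)`) if and only if
`2k² − 1 > 0`, `ξ = 1/(2k²−1)` and `ω² = 2/(2k²−1)`; in that case the data are
`e_∞ = −1`, `e₁ = e₂ = e₃ = e₄ = 1/4` and `P(z) = z − 1/ω`. -/
theorem kovacic_case_one_Clt (k ω ξ : ℝ)
    (hk0 : 0 < k) (hk1 : k < 1) (hω : 0 < ω) :
    ((∃ (einf : ℂ) (e : Fin 4 → ℂ) (d : ℕ) (P : Polynomial ℂ),
        (einf = -1 ∨ einf = 2) ∧ (∀ i, e i = 1 / 4 ∨ e i = 3 / 4) ∧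
        (d : ℂ) = 1 - (einf + ∑ i, e i) ∧
        P.Monic ∧ P.natDegree = d ∧
        (∀ z : ℂ, (∀ i, z ≠ poles k i) →
          (P.derivative.derivative.eval z)
            + 2 * (∑ i, e i / (z - poles k i)) * (P.derivative.eval z)
            + (deriv (fun z => ∑ i, e i / (z - poles k i)) z
                + (∑ i, e i / (z - poles k i)) ^ 2 - rLt k ω ξ z) * P.eval z
            = 0))
      ↔ (0 < 2 * k ^ 2 - 1 ∧ ξ = 1 / (2 * k ^ 2 - 1) ∧
          ω ^ 2 = 2 / (2 * k ^ 2 - 1))) ∧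
    ((0 < 2 * k ^ 2 - 1 ∧ ξ = 1 / (2 * k ^ 2 - 1) ∧ ω ^ 2 = 2 / (2 * k ^ 2 - 1)) →
      ∀ z : ℂ, (∀ i, z ≠ poles k i) →
        deriv (deriv (fun z : ℂ => z - 1 / (ω : ℂ))) z
          + 2 * (∑ i, (1 / 4 : ℂ) / (z - poles k i))
            * deriv (fun z : ℂ => z - 1 / (ω : ℂ)) z
          + (deriv (fun z => ∑ i, (1 / 4 : ℂ) / (z - poles k i)) z
              + (∑ i, (1 / 4 : ℂ) / (z - poles k i)) ^ 2 - rLt k ω ξ z)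
            * (z - 1 / (ω : ℂ))
          = 0) := by
  have hk : k ^ 2 < 1 := pow_lt_one₀ hk0.le hk1 two_ne_zero
  have hdata := isKovacicData_iff hk hω.ne' ξ
  refine ⟨⟨fun ⟨einf, e, d, P, h⟩ => ((hdata einf e d P).1 h).2, fun hparam =>
    ⟨-1, fun _ => 1 / 4, 1, _, (hdata _ _ _ _).2 ⟨⟨rfl, rfl, rfl, rfl⟩, hparam⟩⟩⟩, ?_⟩
  intro hparam z hz
  obtain ⟨-, -, -, -, -, heq⟩ := (hdata _ _ _ _).2 ⟨⟨rfl, rfl, rfl, rfl⟩, hparam⟩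
  specialize heq z hz
  rw [kovacicExpr_X_sub_C] at heq
  exact heq
end
end
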